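/- Main theorem: Let p, r be positive integers, let F be a finite family of compact convex sets in ℝ² with no isolated sets, and let F' = {S ∩ S' : S, S' ∈ F, S ≠ S', S ∩ S' ≠ ∅}. If F has the (p+1,2) property and F' has the (r+1,2) property, then τ(F) ≤ (⌊r/2⌋² + ⌊r/2⌋)·p when r ≥ 2, and τ(F) ≤ p when r = 1. -/

import Mathlib

/-!
The family `F` can be pierced by `r` points, which is at most `(⌊r/2⌋² + ⌊r/2⌋)·p` unless `r = 3`
and `p = 1`.

Among all pairs of distinct intersecting members, take the pair `S, T` for which the
lexicographically largest point `q` of `S ∩ T` is lexicographically smallest. Helly's theorem,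
applied to `S`, `T`, `U` and the convex set of points lexicographically above `q`, shows that every
member `U` meeting `S ∩ T` contains `q` (`exists_good_pair`). Hence the members avoiding `q` avoid
`S ∩ T` altogether, and so do all intersections formed from them. Deleting the members through `q`
and repeating yields piercing points in bijection with pairwise disjoint elements of `F'`. Once the
remaining members are pairwise disjoint, each of them is pierced in its intersection with some
member of the original family; this is where the absence of isolated sets enters. As `F'` has at
most `r` pairwise disjoint elements, at most `r` points are used (`exists_piercing`).

When `r = 3` and `p = 1`, the members intersect pairwise. Delete those through the first point `q`.
If the rest had no common point, Helly's theorem would give three members `A, B, C` among them with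
`A ∩ B ∩ C = ∅`, and `A ∩ B`, `B ∩ C`, `A ∩ C`, `S ∩ T` would be four pairwise disjoint elements of
`F'`. So two points suffice.
-/

theorem exists_lex_max {K : Set (ℝ × ℝ)} (hK : IsCompact K) (hne : K.Nonempty) :
    ∃ q ∈ K, ∀ z ∈ K, toLex z ≤ toLex q := by
  obtain ⟨a, ha, hamax⟩ := hK.exists_isMaxOn hne continuous_fst.continuousOn
  have hK2 : IsCompact (K ∩ {z | z.1 = a.1}) :=
    hK.inter_right (isClosed_eq continuous_fst continuous_const)
  obtain ⟨q, hq, hqmax⟩ := hK2.exists_isMaxOn ⟨a, ha, rfl⟩ continuous_snd.continuousOn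
  refine ⟨q, hq.1, fun z hz => ?_⟩
  have hq1 : q.1 = a.1 := hq.2
  have h1 : z.1 ≤ a.1 := hamax hz
  rw [Prod.Lex.toLex_le_toLex']
  refine ⟨by rw [hq1]; exact h1, fun h => hqmax ⟨hz, ?_⟩⟩
  exact h.trans hq1

theorem convex_lex_ge (q : ℝ × ℝ) : Convex ℝ {z : ℝ × ℝ | toLex q ≤ toLex z} := by
  intro x hx y hy a b ha hb hab
  simp only [Set.mem_ofPred_eq, Prod.Lex.toLex_le_toLex'] at hx hy ⊢
  simp only [Prod.fst_add, Prod.smul_fst, Prod.snd_add, Prod.smul_snd, smul_eq_mul]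
  obtain rfl : b = 1 - a := by linarith
  obtain ⟨hx1, hx2⟩ := hx
  obtain ⟨hy1, hy2⟩ := hy
  refine ⟨by nlinarith, fun h => ?_⟩
  rcases ha.eq_or_lt with rfl | ha
  · have : q.1 = y.1 := by linarith
    linarith [hy2 this]
  rcases hb.eq_or_lt with hb | hb
  · obtain rfl : a = 1 := by linarith
    have : q.1 = x.1 := by linarith
    linarith [hx2 this]
  have e1 : q.1 = x.1 := by nlinarith
  have e2 : q.1 = y.1 := by nlinarith
  nlinarith [hx2 e1, hy2 e2]

/-- Helly's theorem in the plane for four sets, any three of which have a common point. -/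
theorem helly_four {A B C D : Set (ℝ × ℝ)} (hA : Convex ℝ A) (hB : Convex ℝ B)
    (hC : Convex ℝ C) (hD : Convex ℝ D) (hABC : (A ∩ B ∩ C).Nonempty)
    (hABD : (A ∩ B ∩ D).Nonempty) (hACD : (A ∩ C ∩ D).Nonempty)
    (hBCD : (B ∩ C ∩ D).Nonempty) : (A ∩ B ∩ C ∩ D).Nonempty := by
  have key : (⋂ i ∈ (Finset.univ : Finset (Fin 4)), (![A, B, C, D] : Fin 4 → _) i).Nonempty := by
    refine Convex.helly_theorem (𝕜 := ℝ) (by simp) ?_ ?_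
    · intro i _
      fin_cases i <;> assumption
    · intro I _ hI
      have hI : I.card = 3 := by simpa using hI
      obtain ⟨j, hj⟩ : ∃ j, j ∉ I := by
        by_contra! h
        have : I = Finset.univ := by ext; simp [h]
        simp [this] at hI
      obtain ⟨z, hz⟩ : ∃ z, ∀ i, i ≠ j → z ∈ (![A, B, C, D] : Fin 4 → _) i := by
        obtain ⟨z0, ⟨h0, h0'⟩, h0''⟩ := hBCD
        obtain ⟨z1, ⟨h1, h1'⟩, h1''⟩ := hACD
        obtain ⟨z2, ⟨h2, h2'⟩, h2''⟩ := hABD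
        obtain ⟨z3, ⟨h3, h3'⟩, h3''⟩ := hABC
        refine ⟨(![z0, z1, z2, z3] : Fin 4 → _) j, fun i hi => ?_⟩
        fin_cases j <;> fin_cases i <;> first | exact absurd rfl hi | assumption
      refine ⟨z, Set.mem_iInter₂.2 fun i hi => hz i ?_⟩
      rintro rfl
      exact hj hi
  obtain ⟨z, hz⟩ := key
  simp only [Set.mem_iInter] at hz
  exact ⟨z, ⟨⟨hz 0 (by simp), hz 1 (by simp)⟩, hz 2 (by simp)⟩, hz 3 (by simp)⟩

/-- The point `q` here is the lexicographically largest point of `S ∩ T`, for the intersecting pair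
that makes this point lexicographically smallest. -/
theorem exists_good_pair (F : Finset (Set (ℝ × ℝ)))
    (hcpt : ∀ S ∈ F, IsCompact S) (hconv : ∀ S ∈ F, Convex ℝ S)
    (hpair : ∃ S ∈ F, ∃ T ∈ F, S ≠ T ∧ (S ∩ T).Nonempty) :
    ∃ S ∈ F, ∃ T ∈ F, S ≠ T ∧ ∃ q ∈ S ∩ T, ∀ U ∈ F, (U ∩ (S ∩ T)).Nonempty → q ∈ U := by
  classical
  let P := (F ×ˢ F).filter fun x => x.1 ≠ x.2 ∧ (x.1 ∩ x.2).Nonempty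
  have hP : ∀ x, x ∈ P ↔ (x.1 ∈ F ∧ x.2 ∈ F) ∧ x.1 ≠ x.2 ∧ (x.1 ∩ x.2).Nonempty := by
    intro x; simp [P]
  have hmax : ∀ x : Set (ℝ × ℝ) × Set (ℝ × ℝ), ∃ q, x ∈ P →
      q ∈ x.1 ∩ x.2 ∧ ∀ z ∈ x.1 ∩ x.2, toLex z ≤ toLex q := by
    intro x
    by_cases hx : x ∈ P
    · obtain ⟨⟨h1, h2⟩, -, h3⟩ := (hP x).1 hx
      obtain ⟨q, hq⟩ := exists_lex_max ((hcpt _ h1).inter (hcpt _ h2)) h3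
      exact ⟨q, fun _ => hq⟩
    · exact ⟨0, fun h => absurd h hx⟩
  choose m hm using hmax
  have hPne : P.Nonempty := by
    obtain ⟨S, hS, T, hT, h⟩ := hpair
    exact ⟨(S, T), (hP _).2 ⟨⟨hS, hT⟩, h⟩⟩
  obtain ⟨⟨S, T⟩, hST, hmin⟩ := Finset.exists_min_image P (fun x => toLex (m x)) hPne
  obtain ⟨⟨hS, hT⟩, hne, -⟩ := (hP _).1 hST
  obtain ⟨hq, hqmax⟩ := hm _ hST
  refine ⟨S, hS, T, hT, hne, m (S, T), hq, fun U hU hUne => ?_⟩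
  by_cases hUS : U = S
  · rw [hUS]; exact hq.1
  by_cases hUT : U = T
  · rw [hUT]; exact hq.2
  obtain ⟨w, hwU, hwS, hwT⟩ := hUne
  have hSU : (S, U) ∈ P := (hP _).2 ⟨⟨hS, hU⟩, Ne.symm hUS, w, hwS, hwU⟩
  have hTU : (T, U) ∈ P := (hP _).2 ⟨⟨hT, hU⟩, Ne.symm hUT, w, hwT, hwU⟩
  obtain ⟨z, ⟨⟨hzS, hzT⟩, hzU⟩, hzq⟩ := helly_four (hconv S hS) (hconv T hT) (hconv U hU)
    (convex_lex_ge (m (S, T))) ⟨w, ⟨hwS, hwT⟩, hwU⟩ ⟨_, hq, le_refl (toLex (m (S, T)))⟩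
    ⟨_, (hm _ hSU).1, hmin _ hSU⟩ ⟨_, (hm _ hTU).1, hmin _ hTU⟩
  -- `q` is the only point of `S ∩ T` lexicographically at least `q`.
  have : z = m (S, T) := toLex.injective (le_antisymm (hqmax z ⟨hzS, hzT⟩) hzq)
  exact this ▸ hzU

/-- One step of the greedy choice for a subfamily `F` of `F₀`: if `F` has no intersecting pair,
a member of `F` is instead paired with a neighbour in `F₀`. -/
theorem exists_step (F₀ F : Finset (Set (ℝ × ℝ))) (hF : F ⊆ F₀) (hne : F.Nonempty)
    (hcpt : ∀ S ∈ F₀, IsCompact S) (hconv : ∀ S ∈ F₀, Convex ℝ S)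
    (hnoniso : ∀ S ∈ F₀, ∃ S' ∈ F₀, S' ≠ S ∧ (S ∩ S').Nonempty) :
    ∃ S ∈ F, ∃ T ∈ F₀, S ≠ T ∧ ∃ q ∈ S ∩ T, ∀ U ∈ F, (U ∩ (S ∩ T)).Nonempty → q ∈ U := by
  by_cases hpair : ∃ S ∈ F, ∃ T ∈ F, S ≠ T ∧ (S ∩ T).Nonempty
  · obtain ⟨S, hS, T, hT, h⟩ := exists_good_pair F (fun S hS => hcpt S (hF hS))
      (fun S hS => hconv S (hF hS)) hpair
    exact ⟨S, hS, T, hF hT, h⟩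
  · push Not at hpair
    obtain ⟨S, hS⟩ := hne
    obtain ⟨T, hT, hTS, q, hq⟩ := hnoniso S (hF hS)
    refine ⟨S, hS, T, hT, hTS.symm, q, hq, fun U hU ⟨w, hwU, hwS, _⟩ => ?_⟩
    by_cases h : U = S
    · exact h ▸ hq.1
    · have := hpair U hU S hS h
      exact absurd (⟨w, hwU, hwS⟩ : (U ∩ S).Nonempty) (by simp [this])

/-- A subfamily `F` of `F₀` can be pierced by as many points as there are elements in some
pairwise disjoint family `G` of intersections of pairs from `F₀`. Each pair has its first set in
`F`, which keeps `G` disjoint from intersections avoided by all of `F`. -/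
theorem exists_piercing (F₀ : Finset (Set (ℝ × ℝ)))
    (hcpt : ∀ S ∈ F₀, IsCompact S) (hconv : ∀ S ∈ F₀, Convex ℝ S)
    (hnoniso : ∀ S ∈ F₀, ∃ S' ∈ F₀, S' ≠ S ∧ (S ∩ S').Nonempty)
    (F : Finset (Set (ℝ × ℝ))) (hF : F ⊆ F₀) :
    ∃ (C : Finset (ℝ × ℝ)) (G : Finset (Set (ℝ × ℝ))), C.card ≤ G.card ∧
      (∀ S ∈ F, ∃ x ∈ C, x ∈ S) ∧
      (∀ A ∈ G, ∃ S ∈ F, ∃ T ∈ F₀, S ≠ T ∧ (S ∩ T).Nonempty ∧ A = S ∩ T) ∧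
      (G : Set (Set (ℝ × ℝ))).PairwiseDisjoint id := by
  classical
  induction F using Finset.strongInduction with
  | H F ih =>
  rcases F.eq_empty_or_nonempty with rfl | hne
  · exact ⟨∅, ∅, by simp⟩
  obtain ⟨S, hS, T, hT, hST, q, hq, hU⟩ := exists_step F₀ F hF hne hcpt hconv hnoniso
  have hlt : F.filter (q ∉ ·) ⊂ F :=
    Finset.filter_ssubset.2 ⟨S, hS, fun h => h hq.1⟩
  obtain ⟨C, G, hcard, hpierce, hG, hdisj⟩ := ih _ hlt (hlt.1.trans hF)
  have hmiss : ∀ A ∈ G, Disjoint (S ∩ T) A := by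
    intro A hA
    obtain ⟨U, hUF, V, -, -, -, rfl⟩ := hG A hA
    obtain ⟨hUF, hqU⟩ := Finset.mem_filter.1 hUF
    rw [Set.disjoint_left]
    exact fun z hz hzA => hqU (hU U hUF ⟨z, hzA.1, hz⟩)
  have hnew : S ∩ T ∉ G := fun h => Set.disjoint_left.1 (hmiss _ h) hq hq
  refine ⟨insert q C, insert (S ∩ T) G, ?_, ?_, ?_, ?_⟩
  · rw [Finset.card_insert_of_notMem hnew]
    exact (Finset.card_insert_le _ _).trans (by omega)
  · intro U hUF
    by_cases hqU : q ∈ U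
    · exact ⟨q, by simp, hqU⟩
    · obtain ⟨x, hx, hxU⟩ := hpierce U (Finset.mem_filter.2 ⟨hUF, hqU⟩)
      exact ⟨x, by simp [hx], hxU⟩
  · intro A hA
    rcases Finset.mem_insert.1 hA with rfl | hA
    · exact ⟨S, hS, T, hT, hST, ⟨q, hq⟩, rfl⟩
    · obtain ⟨U, hUF, h⟩ := hG A hA
      exact ⟨U, hlt.1 hUF, h⟩
  · rw [Finset.coe_insert]
    exact hdisj.insert fun A hA _ => hmiss A hA

/-- The case `r = 3`, `p = 1`: here `h4` says that no four intersections of pairs are pairwise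
disjoint. -/
theorem exists_two_piercing (F : Finset (Set (ℝ × ℝ)))
    (hcpt : ∀ S ∈ F, IsCompact S) (hconv : ∀ S ∈ F, Convex ℝ S)
    (hnoniso : ∀ S ∈ F, ∃ S' ∈ F, S' ≠ S ∧ (S ∩ S').Nonempty)
    (hint : ∀ S ∈ F, ∀ T ∈ F, S ≠ T → (S ∩ T).Nonempty)
    (h4 : ∀ G : Finset (Set (ℝ × ℝ)),
      (∀ A ∈ G, ∃ S ∈ F, ∃ T ∈ F, S ≠ T ∧ (S ∩ T).Nonempty ∧ A = S ∩ T) →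
      (G : Set (Set (ℝ × ℝ))).PairwiseDisjoint id → G.card ≤ 3) :
    ∃ C : Finset (ℝ × ℝ), C.card ≤ 2 ∧ ∀ S ∈ F, ∃ x ∈ C, x ∈ S := by
  classical
  rcases F.eq_empty_or_nonempty with rfl | hne
  · exact ⟨∅, by simp⟩
  obtain ⟨S, hS, T, hT, hST, q, hq, hU⟩ :=
    exists_step F F subset_rfl hne hcpt hconv hnoniso
  have hnonempty : ∀ A ∈ F, A.Nonempty := fun A hA => by
    obtain ⟨_, -, -, h⟩ := hnoniso A hA
    exact h.left
  have hmiss : ∀ A ∈ F, q ∉ A → ∀ B, Disjoint (S ∩ T) (A ∩ B) := by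
    intro A hA hqA B
    rw [Set.disjoint_left]
    exact fun z hz hzA => hqA (hU A hA ⟨z, hzA.1, hz⟩)
  have hcommon : (⋂₀ (F.filter (q ∉ ·) : Set (Set (ℝ × ℝ)))).Nonempty := by
    refine Convex.helly_theorem_set' (𝕜 := ℝ) (fun X hX => hconv X (Finset.mem_filter.1 hX).1) ?_
    intro G hG hcard
    have hcard : G.card ≤ 3 := by simpa using hcard
    have hGF : ∀ A ∈ G, A ∈ F ∧ q ∉ A := fun A hA => Finset.mem_filter.1 (hG hA)
    obtain h | h | h | h : G.card = 0 ∨ G.card = 1 ∨ G.card = 2 ∨ G.card = 3 := by omega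
    · simp [Finset.card_eq_zero.1 h]
    · obtain ⟨A, rfl⟩ := Finset.card_eq_one.1 h
      simpa using hnonempty A (hGF A (by simp)).1
    · obtain ⟨A, B, hAB, rfl⟩ := Finset.card_eq_two.1 h
      simpa using hint A (hGF A (by simp)).1 B (hGF B (by simp)).1 hAB
    · obtain ⟨A, B, C, hAB, hAC, hBC, rfl⟩ := Finset.card_eq_three.1 h
      obtain ⟨hA, hqA⟩ := hGF A (by simp)
      obtain ⟨hB, hqB⟩ := hGF B (by simp)
      obtain ⟨hC, hqC⟩ := hGF C (by simp)
      by_contra hempty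
      have hempty : ∀ z, z ∈ A → z ∈ B → z ∈ C → False := fun z h1 h2 h3 =>
        hempty ⟨z, by simp [h1, h2, h3]⟩
      have nAB := hint A hA B hB hAB
      have nAC := hint A hA C hC hAC
      have nBC := hint B hB C hC hBC
      have d1 : Disjoint (A ∩ B) (A ∩ C) :=
        Set.disjoint_left.2 fun z h h' => hempty z h.1 h.2 h'.2
      have d2 : Disjoint (A ∩ B) (B ∩ C) :=
        Set.disjoint_left.2 fun z h h' => hempty z h.1 h.2 h'.2
      have d3 : Disjoint (A ∩ C) (B ∩ C) :=
        Set.disjoint_left.2 fun z h h' => hempty z h.1 h'.1 h.2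
      have e1 := hmiss A hA hqA B
      have e2 := hmiss A hA hqA C
      have e3 := hmiss B hB hqB C
      have hle := h4 {S ∩ T, A ∩ B, A ∩ C, B ∩ C} (by
        intro X hX
        simp only [Finset.mem_insert, Finset.mem_singleton] at hX
        rcases hX with rfl | rfl | rfl | rfl
        · exact ⟨S, hS, T, hT, hST, ⟨q, hq⟩, rfl⟩
        · exact ⟨A, hA, B, hB, hAB, nAB, rfl⟩
        · exact ⟨A, hA, C, hC, hAC, nAC, rfl⟩
        · exact ⟨B, hB, C, hC, hBC, nBC, rfl⟩) (by
        intro X hX Y hY hXY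
        simp only [Finset.coe_insert, Finset.coe_singleton, Set.mem_insert_iff,
          Set.mem_singleton_iff] at hX hY
        rcases hX with rfl | rfl | rfl | rfl <;> rcases hY with rfl | rfl | rfl | rfl <;>
          first
          | exact absurd rfl hXY
          | assumption
          | (apply Disjoint.symm; assumption))
      have hqn : (S ∩ T).Nonempty := ⟨q, hq⟩
      have f1 := e1.ne hqn.ne_empty
      have f2 := e2.ne hqn.ne_empty
      have f3 := e3.ne hqn.ne_empty
      have g1 := d1.ne nAB.ne_empty
      have g2 := d2.ne nAB.ne_empty
      have g3 := d3.ne nAC.ne_empty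
      rw [Finset.card_insert_of_notMem (by simp [f1, f2, f3]),
        Finset.card_insert_of_notMem (by simp [g1, g2]),
        Finset.card_pair g3] at hle
      omega
  obtain ⟨x, hx⟩ := hcommon
  refine ⟨{q, x}, Finset.card_le_two, fun U hUF => ?_⟩
  by_cases hqU : q ∈ U
  · exact ⟨q, by simp, hqU⟩
  · exact ⟨x, by simp, hx U (by simp [hUF, hqU])⟩

/-- **Main theorem**: Let `F` be a finite family of compact convex sets in ℝ²
with no isolated sets, and let `F'` be the family of pairwise intersections of
distinct members of `F`.  If `F` has the `(p+1,2)` property and `F'` has the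
`(r+1,2)` property, then `τ(F) ≤ (⌊r/2⌋² + ⌊r/2⌋)·p` when `r ≥ 2`, and
`τ(F) ≤ p` when `r = 1`. -/
theorem main_piercing_theorem (p r : ℕ) (hp : 1 ≤ p) (hr : 1 ≤ r)
    (F : Finset (Set (ℝ × ℝ)))
    (hcpt : ∀ S ∈ F, IsCompact S) (hconv : ∀ S ∈ F, Convex ℝ S)
    (hnoniso : ∀ S ∈ F, ∃ S' ∈ F, S' ≠ S ∧ (S ∩ S').Nonempty)
    (F' : Set (Set (ℝ × ℝ)))
    (hF' : F' = {T | ∃ S ∈ F, ∃ S' ∈ F, S ≠ S' ∧ (S ∩ S').Nonempty ∧ T = S ∩ S'})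
    (hpq : ∀ G : Finset (Set (ℝ × ℝ)), G ⊆ F → G.card = p + 1 →
      ∃ S ∈ G, ∃ T ∈ G, S ≠ T ∧ (S ∩ T).Nonempty)
    (hrq : ∀ G : Finset (Set (ℝ × ℝ)), ↑G ⊆ F' → G.card = r + 1 →
      ∃ S ∈ G, ∃ T ∈ G, S ≠ T ∧ (S ∩ T).Nonempty) :
    (2 ≤ r → ∃ C : Finset (ℝ × ℝ), C.card ≤ (r / 2 * (r / 2) + r / 2) * p ∧
      ∀ S ∈ F, ∃ x ∈ C, x ∈ S) ∧
    (r = 1 → ∃ C : Finset (ℝ × ℝ), C.card ≤ p ∧ ∀ S ∈ F, ∃ x ∈ C, x ∈ S) := by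
  classical
  have hbound : ∀ G : Finset (Set (ℝ × ℝ)),
      (∀ A ∈ G, ∃ S ∈ F, ∃ T ∈ F, S ≠ T ∧ (S ∩ T).Nonempty ∧ A = S ∩ T) →
      (G : Set (Set (ℝ × ℝ))).PairwiseDisjoint id → G.card ≤ r := by
    intro G hG hdisj
    by_contra! hlt
    obtain ⟨H, hHG, hH⟩ := Finset.exists_subset_card_eq (show r + 1 ≤ G.card from hlt)
    obtain ⟨A, hA, B, hB, hAB, hne⟩ := hrq H
      (fun A hA => by rw [hF']; exact hG A (hHG hA)) hH
    exact Set.not_disjoint_iff_nonempty_inter.2 hne (hdisj (hHG hA) (hHG hB) hAB)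
  obtain ⟨C, G, hCG, hC, hG, hdisj⟩ :=
    exists_piercing F hcpt hconv hnoniso F subset_rfl
  have hCr : C.card ≤ r := hCG.trans (hbound G hG hdisj)
  refine ⟨fun hr2 => ?_, fun hr1 => ⟨C, by omega, hC⟩⟩
  by_cases h31 : r = 3 ∧ p = 1
  · obtain ⟨rfl, rfl⟩ := h31
    refine exists_two_piercing F hcpt hconv hnoniso (fun S hS T hT hST => ?_) hbound
    obtain ⟨X, hX, Y, hY, hXY, hne⟩ := hpq {S, T}
      (by simp [Finset.insert_subset_iff, hS, hT]) (Finset.card_pair hST)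
    simp only [Finset.mem_insert, Finset.mem_singleton] at hX hY
    rcases hX with rfl | rfl <;> rcases hY with rfl | rfl
    · exact absurd rfl hXY
    · exact hne
    · rwa [Set.inter_comm]
    · exact absurd rfl hXY
  · refine ⟨C, hCr.trans ?_, hC⟩
    obtain h | h | h : r = 2 ∨ r = 3 ∨ 4 ≤ r := by omega
    · subst h; omega
    · subst h; omega
    -- With `k = ⌊r/2⌋ ≥ 2`, `r ≤ 2k + 1 ≤ k² + k`.
    · have hk : 2 ≤ r / 2 := by omega
      have h1 : r ≤ r / 2 * (r / 2) + r / 2 := by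
        have := Nat.mul_le_mul_right (r / 2) hk
        omega
      exact h1.trans (Nat.le_mul_of_pos_right _ hp)
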